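/- Set c = π/√12. The total number q(E) of partitions of E into distinct positive integer parts satisfies q(E) · 4 · 3^{1/4} · E^{3/4} · exp(-2c√E) → 1 as E → ∞. -/

import Mathlib

open Filter

/-- `qd E`: the number of partitions of `E` into distinct positive integer parts
(any number of parts). -/
def qd (E : ℕ) : ℕ := (Nat.Partition.distincts E).card

/-- `c = π / √12`, so that `c² = π²/12`. -/
noncomputable def c : ℝ := Real.pi / Real.sqrt 12

/-!
The generating function of the partitions into distinct parts, `D(q) = ∏ (1 + q ^ k)`, is up to the
factor `q ^ (-1 / 24)` the eta quotient `η(2z) / η(z)`, so the inversion `z ↦ -1 / (2z)` becomes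
the exact identity `D(e^(-w)) D(e^(-w')) = e^((w + w') / 24) / √2` whenever `w w' = 2π²`. As
`w → 0` with `Re (1 / w) → ∞`, the dual factor `D(e^(-w'))` tends to `1`, hence
`D(e^(-w)) ~ e^(c² / w) / √2`. The saddle point of `e^(c² / w + n w)` is `w = s²` with `n s⁴ = c²`.
Cauchy's integral over `‖q‖ = e^(-s²)`, with the angle measured in units of `s³` and after division
by `e^(2c² / s²)`, tends to the integral of the Gaussian `e^(-c² u²) / √2` by dominated
convergence. The domination away from the saddle point comes from
`‖1 + z‖ ≤ (1 + ‖z‖) e^(-(‖z‖ - Re z) / 4)` for `z = q ^ k`: in the product over `k` the exponents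
sum to a difference of two geometric series.
-/

section DistinctPartitions

open Complex MeasureTheory Set
open scoped Real Topology

/-- The infinite product `(1 + q)(1 + q²)(1 + q³)⋯`, the generating function of the partitions into
distinct parts. -/
noncomputable def distinctProd (q : ℂ) : ℂ := ∏' k : ℕ, (1 + q ^ (k + 1))

/-- The Euler function `φ(q) = (1 - q)(1 - q²)(1 - q³)⋯`, that is, `ModularForm.eta z` as a function
of `q = e ^ (2πiz)` and without its factor `q ^ (1 / 24)`. -/
noncomputable def eulerPhi (q : ℂ) : ℂ := ∏' k : ℕ, (1 - q ^ (k + 1))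

lemma summable_norm_pow_succ {q : ℂ} (hq : ‖q‖ < 1) : Summable fun k : ℕ ↦ ‖q ^ (k + 1)‖ := by
  simpa only [norm_pow] using
    (summable_nat_add_iff 1).2 (summable_geometric_of_lt_one (norm_nonneg q) hq)

lemma multipliable_one_add_pow_succ {q : ℂ} (hq : ‖q‖ < 1) :
    Multipliable fun k : ℕ ↦ 1 + q ^ (k + 1) :=
  multipliable_one_add_of_summable (summable_norm_pow_succ hq)

lemma card_finset_sum_succ_eq_qd (m : ℕ) :
    Nat.card ((fun S : Finset ℕ ↦ ∑ k ∈ S, (k + 1)) ⁻¹' {m}) = qd m := by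
  rw [qd, ← Nat.card_eq_finsetCard]
  let toPartition (S : (fun S : Finset ℕ ↦ ∑ k ∈ S, (k + 1)) ⁻¹' {m}) :
      Nat.Partition.distincts m :=
    ⟨⟨S.1.val.map Nat.succ, by simp +contextual, S.2⟩, by
      simpa [Nat.Partition.distincts] using S.1.nodup.map Nat.succ_injective⟩
  refine Nat.card_eq_of_bijective toPartition ⟨fun S T hST ↦ ?_, fun ⟨p, hp⟩ ↦ ?_⟩
  · have hval : S.1.val.map Nat.succ = T.1.val.map Nat.succ :=
      congrArg (fun p ↦ p.1.parts) hST
    exact Subtype.ext (Finset.val_injective (Multiset.map_injective Nat.succ_injective hval))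
  · have hnodup : p.parts.Nodup := by simpa [Nat.Partition.distincts] using hp
    have hparts : (p.parts.map Nat.pred).map Nat.succ = p.parts := by
      rw [Multiset.map_map]
      exact (Multiset.map_congr rfl fun i hi ↦ Nat.succ_pred_eq_of_pos (p.parts_pos hi)).trans
        p.parts.map_id
    have hpred : (p.parts.map Nat.pred).Nodup :=
      Multiset.Nodup.of_map Nat.succ (by rwa [hparts])
    refine ⟨⟨⟨p.parts.map Nat.pred, hpred⟩, ?_⟩, Subtype.ext (Nat.Partition.ext hparts)⟩
    have hsum := congrArg Multiset.sum hparts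
    rw [p.parts_sum] at hsum
    exact hsum

lemma hasSum_qd_mul_pow {q : ℂ} (hq : ‖q‖ < 1) :
    HasSum (fun m : ℕ ↦ (qd m : ℂ) * q ^ m) (distinctProd q) := by
  have hprod := summable_finsetProd_of_summable_norm (summable_norm_pow_succ hq)
  have hsum : HasSum (fun S : Finset ℕ ↦ q ^ ∑ k ∈ S, (k + 1)) (distinctProd q) := by
    simpa only [distinctProd, tprod_one_add hprod, Finset.prod_pow_eq_pow_sum] using hprod.hasSum
  refine (hsum.tsum_fiberwise fun S : Finset ℕ ↦ ∑ k ∈ S, (k + 1)).congr_fun fun m ↦ ?_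
  calc (qd m : ℂ) * q ^ m
      = ∑' _ : (fun S : Finset ℕ ↦ ∑ k ∈ S, (k + 1)) ⁻¹' {m}, q ^ m := by
        rw [tsum_const, card_finset_sum_succ_eq_qd, nsmul_eq_mul]
    _ = _ := tsum_congr fun S ↦ congrArg (q ^ ·) S.2.symm

lemma eulerPhi_ne_zero {q : ℂ} (hq : ‖q‖ < 1) : eulerPhi q ≠ 0 := by
  have hfactor (k : ℕ) : 1 + -q ^ (k + 1) ≠ 0 := fun h ↦ by
    have hone : q ^ (k + 1) = 1 := by linear_combination -h
    exact (pow_lt_one₀ (norm_nonneg q) hq k.succ_ne_zero).ne (by rw [← norm_pow, hone, norm_one])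
  simpa only [eulerPhi, sub_eq_add_neg] using
    tprod_one_add_ne_zero_of_summable hfactor
      (by simpa only [norm_neg] using summable_norm_pow_succ hq)

lemma distinctProd_eq_div {q : ℂ} (hq : ‖q‖ < 1) :
    distinctProd q = eulerPhi (q ^ 2) / eulerPhi q := by
  rw [eq_div_iff (eulerPhi_ne_zero hq), distinctProd, eulerPhi, eulerPhi,
    ← (multipliable_one_add_pow_succ hq).tprod_mul (ModularForm.multipliable_one_sub_pow hq)]
  exact tprod_congr fun k ↦ by ring

lemma continuousOn_eulerPhi : ContinuousOn eulerPhi (Metric.ball 0 1) :=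
  ModularForm.differentiableOn_tprod_one_sub_pow.continuousOn

lemma continuousOn_distinctProd : ContinuousOn distinctProd (Metric.ball 0 1) := by
  have hsq : MapsTo (fun q : ℂ ↦ q ^ 2) (Metric.ball 0 1) (Metric.ball 0 1) := fun q hq ↦ by
    rw [mem_ball_zero_iff] at hq ⊢
    simpa only [norm_pow] using pow_lt_one₀ (norm_nonneg q) hq two_ne_zero
  refine ((continuousOn_eulerPhi.comp (by fun_prop) hsq).div continuousOn_eulerPhi
    fun q hq ↦ ?_).congr fun q hq ↦ ?_
  · exact eulerPhi_ne_zero (mem_ball_zero_iff.1 hq)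
  · exact distinctProd_eq_div (mem_ball_zero_iff.1 hq)

lemma tendsto_distinctProd_nhds_zero : Tendsto distinctProd (𝓝 0) (𝓝 1) := by
  simpa [distinctProd] using
    (continuousOn_distinctProd.continuousAt (Metric.ball_mem_nhds 0 one_pos)).tendsto

lemma integral_exp_int_mul_I (k : ℤ) :
    ∫ θ in -π..π, exp (k * θ * I) = if k = 0 then 2 * (π : ℂ) else 0 := by
  split_ifs with hk
  · simp [hk, two_mul]
  · have hkI : (k * I : ℂ) ≠ 0 := mul_ne_zero (Int.cast_ne_zero.2 hk) I_ne_zero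
    have hperiod : exp (k * I * π) = exp (k * I * ↑(-π)) :=
      exp_eq_exp_iff_exists_int.2 ⟨k, by push_cast; ring⟩
    simp only [mul_right_comm _ _ I, integral_exp_mul_complex hkI, hperiod, sub_self, zero_div]

lemma integral_mul_inv_pow_eq_coeff {a : ℕ → ℂ} {f : ℂ → ℂ} {r : ℝ} (hr : 0 < r)
    (ha : Summable fun m ↦ ‖a m‖ * r ^ m)
    (hf : ∀ θ, HasSum (fun m ↦ a m * circleMap 0 r θ ^ m) (f (circleMap 0 r θ))) (n : ℕ) :
    ∫ θ in -π..π, f (circleMap 0 r θ) * (circleMap 0 r θ ^ n)⁻¹ = 2 * π * a n := by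
  have hne (θ : ℝ) : circleMap 0 r θ ≠ 0 := circleMap_ne_center hr.ne'
  have hterm (m : ℕ) : ∫ θ in -π..π, a m * circleMap 0 r θ ^ m * (circleMap 0 r θ ^ n)⁻¹ =
      if m = n then 2 * π * a n else 0 := by
    have hchar (θ : ℝ) : a m * circleMap 0 r θ ^ m * (circleMap 0 r θ ^ n)⁻¹ =
        a m * (r ^ (m - n : ℤ) : ℝ) * exp ((m - n : ℤ) * θ * I) := by
      rw [mul_assoc, ← zpow_natCast, ← zpow_natCast, ← zpow_neg, ← zpow_add₀ (hne θ),
        ← sub_eq_add_neg, circleMap_zero_zpow, circleMap_zero, mul_assoc, ofReal_mul,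
        ofReal_intCast]
    simp only [hchar, intervalIntegral.integral_const_mul, integral_exp_int_mul_I]
    by_cases hmn : m = n
    · simp [hmn, mul_comm]
    · simp [hmn, sub_eq_zero]
  have hcont (m : ℕ) : Continuous fun θ ↦ a m * circleMap 0 r θ ^ m * (circleMap 0 r θ ^ n)⁻¹ :=
    (continuous_const.mul ((continuous_circleMap 0 r).pow m)).mul
      (((continuous_circleMap 0 r).pow n).inv₀ fun θ ↦ pow_ne_zero n (hne θ))
  have hsum := intervalIntegral.hasSum_integral_of_dominated_convergence
    (fun m _ ↦ ‖a m‖ * r ^ m * (r ^ n)⁻¹) (fun m ↦ (hcont m).aestronglyMeasurable)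
    (fun m ↦ .of_forall fun θ _ ↦ by simp [abs_of_pos hr])
    (.of_forall fun θ _ ↦ ha.mul_right _) intervalIntegrable_const
    (.of_forall fun θ _ ↦ (hf θ).mul_right _) (μ := volume) (a := -π) (b := π)
  simp only [hterm] at hsum
  exact hsum.unique (hasSum_ite_eq n (2 * π * a n))

lemma sqrt_ofReal_mul {r : ℝ} (hr : 0 < r) (z : ℂ) : sqrt (r * z) = √r * sqrt z := by
  have hscale (x : ℝ) : √(r * x / 2) = √r * √(x / 2) := by
    rw [mul_div_assoc, Real.sqrt_mul hr.le]
  simp only [sqrt_eq_real_add_ite, norm_mul, norm_real, Real.norm_of_nonneg hr.le, re_ofReal_mul,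
    im_ofReal_mul, mul_nonneg_iff_of_pos_left hr, ← mul_add, ← mul_sub, hscale, ofReal_mul]
  ring

lemma eta_eq_exp_mul_eulerPhi (w : ℂ) :
    ModularForm.eta (I * w / (2 * π)) = exp (-w / 24) * eulerPhi (exp (-w)) := by
  have hexp : 2 * π * I * (I * w / (2 * π)) = -w := by
    field_simp
    linear_combination w * I_sq
  simp only [ModularForm.eta, ModularForm.eta_q, eulerPhi, Function.Periodic.qParam, hexp,
    ofReal_one, div_one, ofReal_ofNat]

lemma distinctProd_exp_neg {w : ℂ} (hw : 0 < w.re) :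
    distinctProd (exp (-w)) = exp (w / 24) *
      (ModularForm.eta (2 * (I * w / (2 * π))) / ModularForm.eta (I * w / (2 * π))) := by
  have hnorm : ‖exp (-w)‖ < 1 := by simpa [norm_exp] using hw
  have htwo : 2 * (I * w / (2 * π)) = I * (2 * w) / (2 * π) := by ring
  rw [htwo, distinctProd_eq_div hnorm, eta_eq_exp_mul_eulerPhi, eta_eq_exp_mul_eulerPhi,
    ← exp_nat_mul, mul_div_mul_comm, ← exp_sub, ← mul_assoc, ← exp_add, Nat.cast_ofNat, mul_neg]
  have hexp : w / 24 + (-(2 * w) / 24 - -w / 24) = 0 := by ring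
  rw [hexp, exp_zero, one_mul]

lemma sqrt_two_mul_eta_two_mul_mul_eta_two_mul {z z' : ℂ} (hz' : 0 < z'.im)
    (h : 2 * z * z' = -1) :
    √2 * (ModularForm.eta (2 * z) * ModularForm.eta (2 * z')) =
      ModularForm.eta z * ModularForm.eta z' := by
  have hz₀' : z' ≠ 0 := fun h ↦ by simp [h] at hz'
  have h_two_mul : 0 < (2 * z').im := by simpa using hz'
  have hS := ModularForm.eta_comp_eq_csqrt_I_inv hz'
  have hS₂ := ModularForm.eta_comp_eq_csqrt_I_inv h_two_mul
  rw [Function.comp_apply, ← h, mul_div_cancel_right₀ _ hz₀'] at hS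
  rw [Function.comp_apply, ← h, mul_right_comm,
    mul_div_cancel_left₀ _ (by simpa using hz₀')] at hS₂
  have hsqrt : sqrt (2 * z') = √2 * sqrt z' := mod_cast sqrt_ofReal_mul two_pos z'
  rw [hS, hS₂]
  simp only [Pi.smul_apply, Pi.mul_apply, smul_eq_mul, hsqrt]
  ring

lemma distinctProd_exp_neg_mul_distinctProd_exp_neg {w w' : ℂ} (hw : 0 < w.re) (hw' : 0 < w'.re)
    (h : w * w' = 2 * π ^ 2) :
    distinctProd (exp (-w)) * distinctProd (exp (-w')) = exp ((w + w') / 24) / √2 := by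
  have him {v : ℂ} (hv : 0 < v.re) : 0 < (I * v / (2 * π)).im := by
    rw [mul_div_assoc, I_mul_im, ← ofReal_ofNat, ← ofReal_mul, div_ofReal_re]
    positivity
  have heta := sqrt_two_mul_eta_two_mul_mul_eta_two_mul (him hw') (z := I * w / (2 * π)) (by
    field_simp
    linear_combination I ^ 2 * h + 2 * π ^ 2 * I_sq)
  rw [distinctProd_exp_neg hw, distinctProd_exp_neg hw', mul_mul_mul_comm, ← exp_add,
    div_mul_div_comm, ← heta, ← add_div, div_eq_mul_inv (exp _), div_mul_cancel_right₀]
  have hne {v : ℂ} (hv : 0 < v.re) : ModularForm.eta (2 * (I * v / (2 * π))) ≠ 0 :=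
    ModularForm.eta_ne_zero (by simpa using him hv)
  exact mul_ne_zero (hne hw) (hne hw')

lemma c_sq : c ^ 2 = π ^ 2 / 12 := by
  rw [c, div_pow, Real.sq_sqrt (by norm_num)]

lemma tendsto_distinctProd_exp_neg_mul_exp {ι : Type*} {l : Filter ι} {w : ι → ℂ}
    (hw : Tendsto w l (𝓝 0)) (hinv : Tendsto (fun i ↦ (w i)⁻¹.re) l atTop) :
    Tendsto (fun i ↦ distinctProd (exp (-w i)) * exp (-(c ^ 2 / w i))) l (𝓝 (√2)⁻¹) := by
  have hc : (c : ℂ) ^ 2 = π ^ 2 / 12 := mod_cast congrArg ofReal c_sq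
  have hdual_re (i : ι) : (2 * π ^ 2 / w i).re = 2 * π ^ 2 * (w i)⁻¹.re := by
    rw [div_eq_mul_inv, ← ofReal_ofNat, ← ofReal_pow, ← ofReal_mul, re_ofReal_mul]
  have hdual : Tendsto (fun i ↦ distinctProd (exp (-(2 * π ^ 2 / w i)))) l (𝓝 1) := by
    refine tendsto_distinctProd_nhds_zero.comp (tendsto_exp_nhds_zero_iff.2 ?_)
    simp only [neg_re, hdual_re]
    exact tendsto_neg_atTop_atBot.comp (hinv.const_mul_atTop (by positivity))
  have hexp : Tendsto (fun i ↦ exp (w i / 24) / √2) l (𝓝 (√2)⁻¹) := by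
    simpa using ((continuous_exp.tendsto _).comp (hw.div_const 24)).div_const (√2 : ℂ)
  have hquot := hexp.div hdual one_ne_zero
  rw [div_one] at hquot
  refine hquot.congr' ?_
  filter_upwards [hinv.eventually_gt_atTop 0, hdual.eventually_ne one_ne_zero] with i hpos hne
  have hw₀ : w i ≠ 0 := fun h ↦ by simp [h] at hpos
  have hre : 0 < (w i).re := by
    rwa [inv_re, div_pos_iff_of_pos_right (normSq_pos.2 hw₀)] at hpos
  have hre' : 0 < (2 * π ^ 2 / w i).re := by
    rw [hdual_re]
    positivity
  rw [Pi.div_apply, div_eq_iff hne, mul_right_comm, distinctProd_exp_neg_mul_distinctProd_exp_neg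
    hre hre' (mul_div_cancel₀ _ hw₀), hc, div_mul_eq_mul_div, ← exp_add]
  congr 2
  ring

lemma norm_one_add_le_mul_exp {z : ℂ} (hz : ‖z‖ ≤ 1) :
    ‖1 + z‖ ≤ (1 + ‖z‖) * Real.exp (-(‖z‖ - z.re) / 4) := by
  have hgap : 0 ≤ ‖z‖ - z.re := sub_nonneg.2 (re_le_norm z)
  have hsq : ‖1 + z‖ ^ 2 = (1 + ‖z‖) ^ 2 - 2 * (‖z‖ - z.re) := by
    rw [← normSq_eq_norm_sq, normSq_add, normSq_one, normSq_eq_norm_sq, one_mul, conj_re]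
    ring
  have hexp : 1 - (‖z‖ - z.re) / 2 ≤ Real.exp (-(‖z‖ - z.re) / 4) ^ 2 := by
    rw [← Real.exp_nat_mul]
    refine (le_of_eq ?_).trans (Real.add_one_le_exp _)
    push_cast
    ring
  refine le_of_sq_le_sq ?_ (by positivity)
  calc ‖1 + z‖ ^ 2 ≤ (1 + ‖z‖) ^ 2 * (1 - (‖z‖ - z.re) / 2) := by
        have hfour : (1 + ‖z‖) ^ 2 ≤ 2 ^ 2 := by
          gcongr
          linarith
        linarith [mul_nonneg hgap (sub_nonneg.2 hfour)]
    _ ≤ ((1 + ‖z‖) * Real.exp (-(‖z‖ - z.re) / 4)) ^ 2 := by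
        rw [mul_pow]
        gcongr

lemma norm_distinctProd_le {q : ℂ} (hq : ‖q‖ < 1) :
    ‖distinctProd q‖ ≤
      ‖distinctProd ‖q‖‖ * Real.exp (-((1 - ‖q‖)⁻¹ - ((1 - q)⁻¹).re) / 4) := by
  have hq' : ‖(‖q‖ : ℂ)‖ < 1 := by simpa using hq
  have hgap : HasSum (fun k : ℕ ↦ ‖q ^ (k + 1)‖ - (q ^ (k + 1)).re)
      ((1 - ‖q‖)⁻¹ - ((1 - q)⁻¹).re) := by
    have h := (hasSum_geometric_of_lt_one (norm_nonneg q) hq).sub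
      (hasSum_re (hasSum_geometric_of_norm_lt_one hq))
    simpa using (hasSum_nat_add_iff' 1).2 h
  have hfactor (k : ℕ) : ‖1 + q ^ (k + 1)‖ ≤
      ‖1 + (‖q‖ : ℂ) ^ (k + 1)‖ * Real.exp (-(‖q ^ (k + 1)‖ - (q ^ (k + 1)).re) / 4) := by
    have hk := norm_one_add_le_mul_exp (z := q ^ (k + 1))
      (by simpa only [norm_pow] using pow_le_one₀ (norm_nonneg q) hq.le)
    have hnorm : ‖1 + (‖q‖ : ℂ) ^ (k + 1)‖ = 1 + ‖q ^ (k + 1)‖ := by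
      rw [norm_pow]
      norm_cast
      exact Real.norm_of_nonneg (by positivity)
    rwa [hnorm]
  have hleft := (multipliable_one_add_pow_succ hq).hasProd.norm
  have hright := (multipliable_one_add_pow_succ hq').hasProd.norm.mul (hgap.neg.div_const 4).rexp
  exact le_of_tendsto_of_tendsto' hleft hright fun S ↦
    Finset.prod_le_prod (fun k _ ↦ norm_nonneg _) fun k _ ↦ hfactor k

lemma inv_one_sub_norm_sub_re_inv_one_sub {q : ℂ} (hq : ‖q‖ < 1) :
    (1 - ‖q‖)⁻¹ - ((1 - q)⁻¹).re =
      (1 + ‖q‖) * (‖q‖ - q.re) / ((1 - ‖q‖) * ((1 - ‖q‖) ^ 2 + 2 * (‖q‖ - q.re))) := by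
  have hpos : 0 < 1 - ‖q‖ := sub_pos.2 hq
  have hgap : 0 ≤ ‖q‖ - q.re := sub_nonneg.2 (re_le_norm q)
  have hsq : normSq (1 - q) = (1 - ‖q‖) ^ 2 + 2 * (‖q‖ - q.re) := by
    rw [normSq_sub, normSq_one, normSq_eq_norm_sq, one_mul, conj_re]
    ring
  rw [inv_re, hsq, sub_re, one_re]
  field_simp
  ring

lemma div_le_inv_one_sub_norm_sub_re_inv_one_sub {q : ℂ} {t y : ℝ} (hq : ‖q‖ < 1)
    (ht : 1 - ‖q‖ ≤ t) (hy₀ : 0 ≤ y) (hy : y ≤ 2 * (‖q‖ - q.re)) :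
    y / (2 * t * (t ^ 2 + y)) ≤ (1 - ‖q‖)⁻¹ - ((1 - q)⁻¹).re := by
  have hδ : 0 < 1 - ‖q‖ := sub_pos.2 hq
  have ht₀ : 0 < t := hδ.trans_le ht
  rw [inv_one_sub_norm_sub_re_inv_one_sub hq]
  set Y := 2 * (‖q‖ - q.re) with hY
  have hY₀ : 0 ≤ Y := hy₀.trans hy
  have hmono : y / (t ^ 2 + y) ≤ Y / ((1 - ‖q‖) ^ 2 + Y) := by
    rw [div_le_div_iff₀ (by positivity) (by positivity), mul_add, mul_add, mul_comm Y y]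
    gcongr
  calc y / (2 * t * (t ^ 2 + y)) = y / (t ^ 2 + y) / (2 * t) := by
        rw [div_div, mul_comm (2 * t)]
    _ ≤ Y / ((1 - ‖q‖) ^ 2 + Y) / (2 * (1 - ‖q‖)) := by gcongr
    _ = 1 * (Y / 2) / ((1 - ‖q‖) * ((1 - ‖q‖) ^ 2 + Y)) := by
        rw [div_div, one_mul, div_div]
        ring
    _ ≤ (1 + ‖q‖) * (‖q‖ - q.re) / ((1 - ‖q‖) * ((1 - ‖q‖) ^ 2 + Y)) := by
        rw [hY, mul_div_cancel_left₀ _ two_ne_zero]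
        gcongr
        · linarith
        · linarith [norm_nonneg q]

lemma norm_distinctProd_circleMap_le {t θ : ℝ} (ht : 0 < t) (ht₁ : t ≤ 1) (hθ : |θ| ≤ π) :
    ‖distinctProd (circleMap 0 (Real.exp (-t)) θ)‖ ≤ ‖distinctProd (Real.exp (-t))‖ *
      Real.exp (-(θ ^ 2 / (8 * t * (π ^ 2 * t ^ 2 + θ ^ 2)))) := by
  set r := Real.exp (-t) with hr
  have hr₀ : 0 < r := Real.exp_pos _
  have hr₁ : r < 1 := by simpa [hr] using ht
  have hrt : 1 - r ≤ t := by linarith [Real.one_sub_le_exp_neg t]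
  have hr_quarter : 1 / 4 ≤ r := by
    rw [hr, Real.exp_neg, one_div]
    gcongr
    exact (Real.exp_le_exp.2 ht₁).trans (by linarith [Real.exp_one_lt_d9])
  have hnorm : ‖circleMap 0 r θ‖ = r := by rw [norm_circleMap_zero, abs_of_pos hr₀]
  have hcos : θ ^ 2 / π ^ 2 ≤ 2 * (r - r * Real.cos θ) :=
    calc θ ^ 2 / π ^ 2 = 2 * (1 / 4 * (2 / π ^ 2 * θ ^ 2)) := by ring
      _ ≤ 2 * (r * (1 - Real.cos θ)) := by
          gcongr
          linarith [Real.cos_le_one_sub_mul_cos_sq hθ]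
      _ = 2 * (r - r * Real.cos θ) := by ring
  have hgap := div_le_inv_one_sub_norm_sub_re_inv_one_sub (t := t) (y := θ ^ 2 / π ^ 2)
    (hnorm.trans_lt hr₁) (by rwa [hnorm]) (by positivity) (by rwa [hnorm, circleMap_zero_re])
  have hquot : θ ^ 2 / (8 * t * (π ^ 2 * t ^ 2 + θ ^ 2)) =
      θ ^ 2 / π ^ 2 / (2 * t * (t ^ 2 + θ ^ 2 / π ^ 2)) / 4 := by
    field_simp
    ring
  refine (norm_distinctProd_le (hnorm.trans_lt hr₁)).trans ?_
  rw [hnorm] at hgap ⊢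
  rw [hquot, neg_div]
  gcongr
lemma sq_le_add_pow_three {s u M A X : ℝ} (hA : 0 ≤ A) (hX : 0 ≤ X) (hsu : |s ^ 3 * u| ≤ M)
    (hu : u ^ 2 ≤ A * X * max 1 (s ^ 2 * u ^ 2)) : u ^ 2 ≤ A * X + M ^ 2 * (A * X) ^ 3 := by
  rcases le_total (s ^ 2 * u ^ 2) 1 with hsmall | hlarge
  · rw [max_eq_left hsmall, mul_one] at hu
    exact hu.trans (le_add_of_nonneg_right (by positivity))
  · -- Cubing `1 ≤ A * X * s ^ 2` produces `s ^ 6 * u ^ 2`, which `hsu` controls.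
    rw [max_eq_right hlarge] at hu
    have hu₀ : 0 < u ^ 2 := (sq_nonneg u).lt_of_ne fun h ↦ by norm_num [← h] at hlarge
    have hAXs : 1 ≤ A * X * s ^ 2 := le_of_mul_le_mul_right (by linarith) hu₀
    calc u ^ 2 ≤ u ^ 2 * (A * X * s ^ 2) ^ 3 :=
          le_mul_of_one_le_right hu₀.le (one_le_pow₀ hAXs)
      _ = |s ^ 3 * u| ^ 2 * (A * X) ^ 3 := by
          rw [sq_abs]
          ring
      _ ≤ M ^ 2 * (A * X) ^ 3 := by gcongr
      _ ≤ A * X + M ^ 2 * (A * X) ^ 3 := le_add_of_nonneg_left (by positivity)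

lemma exists_exp_neg_le_mul_inv_one_add_sq : ∃ K : ℝ, ∀ s u : ℝ, |s ^ 3 * u| ≤ π →
    Real.exp (-(u ^ 2 / (8 * (π ^ 2 + s ^ 2 * u ^ 2)))) ≤ K * (1 + u ^ 2)⁻¹ := by
  set A := 8 * (π ^ 2 + 1)
  refine ⟨1 + A + 6 * (π ^ 2 * A ^ 3), fun s u hsu ↦ ?_⟩
  set X := u ^ 2 / (8 * (π ^ 2 + s ^ 2 * u ^ 2)) with hX
  have hX₀ : 0 ≤ X := by positivity
  have hu : u ^ 2 ≤ A * X * max 1 (s ^ 2 * u ^ 2) :=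
    calc u ^ 2 = X * (8 * (π ^ 2 * 1 + s ^ 2 * u ^ 2)) := by
          rw [hX]
          field_simp
      _ ≤ X * (8 * (π ^ 2 * max 1 (s ^ 2 * u ^ 2) + max 1 (s ^ 2 * u ^ 2))) := by
          gcongr
          exacts [le_max_left _ _, le_max_right _ _]
      _ = A * X * max 1 (s ^ 2 * u ^ 2) := by ring
  have hexp : 1 + u ^ 2 ≤ (1 + A + 6 * (π ^ 2 * A ^ 3)) * Real.exp X :=
    calc 1 + u ^ 2 ≤ 1 + (A * X + π ^ 2 * (A * X) ^ 3) := by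
          gcongr
          exact sq_le_add_pow_three (by positivity) hX₀ hsu hu
      _ = 1 + A * X + 6 * (π ^ 2 * A ^ 3) * (X ^ 3 / Nat.factorial 3) := by
          norm_num [Nat.factorial]
          ring
      _ ≤ Real.exp X + A * Real.exp X + 6 * (π ^ 2 * A ^ 3) * Real.exp X := by
          gcongr
          · exact Real.one_le_exp hX₀
          · linarith [Real.add_one_le_exp X]
          · exact Real.pow_div_factorial_le_exp X hX₀ 3
      _ = (1 + A + 6 * (π ^ 2 * A ^ 3)) * Real.exp X := by ring
  rw [Real.exp_neg, ← div_eq_mul_inv, inv_eq_one_div, div_le_div_iff₀ (Real.exp_pos X)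
    (by positivity), one_mul]
  exact hexp

/-- The integrand of Cauchy's integral for the coefficient `qd n` of `distinctProd`, on the circle
of radius `e ^ (-s ^ 2)` with `n = c ^ 2 / s ^ 4`, as a function of the angle `s ^ 3 * u`. It is
divided by the expected growth `e ^ (2 * c ^ 2 / s ^ 2) = e ^ (2 * c * √n)`; the saddle point is at
`u = 0`, and `s ^ 3` is the width that makes the limit `s → 0` a Gaussian in `u`. -/
noncomputable def saddleIntegrand (s u : ℝ) : ℂ :=
  distinctProd (circleMap 0 (Real.exp (-s ^ 2)) (s ^ 3 * u)) *
    exp (-(c ^ 2 / s ^ 2 * (1 + s * u * I)))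

lemma circleMap_exp_neg_sq (s u : ℝ) :
    circleMap 0 (Real.exp (-s ^ 2)) (s ^ 3 * u) = exp (-(s ^ 2 * (1 - s * u * I))) := by
  rw [circleMap_zero, ofReal_exp, ← exp_add]
  push_cast
  ring_nf

lemma continuous_saddleIntegrand {s : ℝ} (hs : s ≠ 0) : Continuous (saddleIntegrand s) := by
  have hmem (u : ℝ) : circleMap 0 (Real.exp (-s ^ 2)) (s ^ 3 * u) ∈ Metric.ball (0 : ℂ) 1 := by
    simp [sq_pos_of_ne_zero hs]
  refine (continuousOn_distinctProd.comp_continuous ?_ hmem).mul (by fun_prop)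
  exact (continuous_circleMap 0 _).comp (continuous_const_mul _)

lemma tendsto_saddleIntegrand (u : ℝ) :
    Tendsto (saddleIntegrand · u) (𝓝[>] 0) (𝓝 ((√2)⁻¹ * Real.exp (-c ^ 2 * u ^ 2) : ℝ)) := by
  have hden₀ (s : ℝ) : (1 - s * u * I : ℂ) ≠ 0 := fun h ↦ by simpa using congrArg re h
  have hcast : Tendsto (fun s : ℝ ↦ (s : ℂ)) (𝓝[>] 0) (𝓝 0) :=
    (continuous_ofReal.tendsto' 0 0 ofReal_zero).mono_left nhdsWithin_le_nhds
  have hden : Tendsto (fun s : ℝ ↦ (1 - s * u * I : ℂ)) (𝓝[>] 0) (𝓝 1) := by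
    simpa using ((hcast.mul_const (u : ℂ)).mul_const I).const_sub 1
  have hw : Tendsto (fun s : ℝ ↦ (s ^ 2 * (1 - s * u * I) : ℂ)) (𝓝[>] 0) (𝓝 0) := by
    simpa using (hcast.pow 2).mul hden
  have hinv : Tendsto (fun s : ℝ ↦ (s ^ 2 * (1 - s * u * I) : ℂ)⁻¹.re) (𝓝[>] 0) atTop := by
    have hre (s : ℝ) :
        (s ^ 2 * (1 - s * u * I) : ℂ)⁻¹.re = s⁻¹ ^ 2 * (1 - s * u * I : ℂ)⁻¹.re := by
      rw [mul_inv, ← inv_pow, ← ofReal_inv, ← ofReal_pow, re_ofReal_mul]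
    simp only [hre]
    refine ((tendsto_pow_atTop two_ne_zero).comp tendsto_inv_nhdsGT_zero).atTop_mul_pos one_pos ?_
    have hre_one := (continuous_re.tendsto _).comp (hden.inv₀ one_ne_zero)
    rwa [inv_one, one_re] at hre_one
  have hgauss : Tendsto (fun s : ℝ ↦ exp (-c ^ 2 * u ^ 2 / (1 - s * u * I))) (𝓝[>] 0)
      (𝓝 (exp (-c ^ 2 * u ^ 2))) := by
    have hquot := (tendsto_const_nhds (x := (-c ^ 2 * u ^ 2 : ℂ))).div hden one_ne_zero
    rw [div_one] at hquot
    exact hquot.cexp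
  push_cast
  refine ((tendsto_distinctProd_exp_neg_mul_exp hw hinv).mul hgauss).congr' ?_
  filter_upwards [self_mem_nhdsWithin] with s hs
  have hs₀ : (s : ℂ) ≠ 0 := ofReal_ne_zero.2 (ne_of_gt hs)
  rw [saddleIntegrand, circleMap_exp_neg_sq, mul_assoc, ← exp_add]
  congr 2
  field_simp [hden₀ s]
  linear_combination -(c ^ 2 * s ^ 2 * u ^ 2) * I_sq

lemma norm_saddleIntegrand_le {s u : ℝ} (hs : 0 < s) (hs₁ : s ≤ 1) (hu : |s ^ 3 * u| ≤ π) :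
    ‖saddleIntegrand s u‖ ≤
      ‖saddleIntegrand s 0‖ * Real.exp (-(u ^ 2 / (8 * (π ^ 2 + s ^ 2 * u ^ 2)))) := by
  have hexp (v : ℝ) :
      ‖exp (-(c ^ 2 / s ^ 2 * (1 + s * v * I)))‖ = Real.exp (-(c ^ 2 / s ^ 2)) := by
    rw [norm_exp, ← ofReal_pow, ← ofReal_pow, ← ofReal_div, neg_re, re_ofReal_mul]
    simp
  have hle := norm_distinctProd_circleMap_le (sq_pos_of_pos hs) (pow_le_one₀ hs.le hs₁) hu
  have hscale : (s ^ 3 * u) ^ 2 / (8 * s ^ 2 * (π ^ 2 * (s ^ 2) ^ 2 + (s ^ 3 * u) ^ 2)) =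
      u ^ 2 / (8 * (π ^ 2 + s ^ 2 * u ^ 2)) := by
    field_simp
  rw [hscale] at hle
  have hzero : circleMap 0 (Real.exp (-s ^ 2)) (s ^ 3 * 0) = Real.exp (-s ^ 2) := by
    simp [circleMap_zero]
  rw [saddleIntegrand, saddleIntegrand, norm_mul, norm_mul, hexp, hexp, hzero, mul_right_comm]
  gcongr

lemma exists_eventually_norm_saddleIntegrand_le : ∃ K : ℝ, ∀ᶠ s in 𝓝[>] 0, ∀ u : ℝ,
    |s ^ 3 * u| ≤ π → ‖saddleIntegrand s u‖ ≤ K * (1 + u ^ 2)⁻¹ := by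
  obtain ⟨K, hK⟩ := exists_exp_neg_le_mul_inv_one_add_sq
  obtain ⟨B, hB⟩ := (tendsto_saddleIntegrand 0).norm.isBoundedUnder_le
  refine ⟨B * K, ?_⟩
  filter_upwards [hB, self_mem_nhdsWithin, Ioc_mem_nhdsGT one_pos] with s hsB hs hs₁ u hu
  have hs₀ : ‖saddleIntegrand s 0‖ ≤ B := hsB
  calc ‖saddleIntegrand s u‖
      ≤ ‖saddleIntegrand s 0‖ * Real.exp (-(u ^ 2 / (8 * (π ^ 2 + s ^ 2 * u ^ 2)))) :=
        norm_saddleIntegrand_le hs hs₁.2 hu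
    _ ≤ B * (K * (1 + u ^ 2)⁻¹) := by
        gcongr
        · exact (norm_nonneg _).trans hs₀
        · exact hK s u hu
    _ = B * K * (1 + u ^ 2)⁻¹ := (mul_assoc _ _ _).symm

lemma integral_saddleIntegrand {s : ℝ} (hs : 0 < s) {n : ℕ} (hn : n * s ^ 4 = c ^ 2) :
    ∫ u in -(π / s ^ 3)..π / s ^ 3, saddleIntegrand s u =
      (2 * π / s ^ 3 * qd n * Real.exp (-(2 * c ^ 2 / s ^ 2)) : ℝ) := by
  set r := Real.exp (-s ^ 2) with hr
  have hr₀ : 0 < r := Real.exp_pos _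
  have hr₁ : r < 1 := by simpa [hr] using sq_pos_of_pos hs
  have hnorm (θ : ℝ) : ‖circleMap 0 r θ‖ < 1 := by rwa [norm_circleMap_zero, abs_of_pos hr₀]
  have hsummable : Summable fun m ↦ ‖(qd m : ℂ)‖ * r ^ m := by
    simpa [abs_of_pos hr₀] using
      (hasSum_qd_mul_pow (q := r) (by rwa [norm_real, Real.norm_of_nonneg hr₀.le])).summable.norm
  have hcoeff := integral_mul_inv_pow_eq_coeff (a := fun m ↦ (qd m : ℂ)) hr₀ (f := distinctProd)
    hsummable (fun θ ↦ hasSum_qd_mul_pow (hnorm θ)) n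
  have hscale (u : ℝ) : saddleIntegrand s u = exp (-(2 * c ^ 2 / s ^ 2)) *
      (distinctProd (circleMap 0 r (s ^ 3 * u)) * (circleMap 0 r (s ^ 3 * u) ^ n)⁻¹) := by
    have hs₀ : (s : ℂ) ≠ 0 := ofReal_ne_zero.2 hs.ne'
    have hn' : (n : ℂ) * s ^ 4 = c ^ 2 := mod_cast congrArg ofReal hn
    rw [saddleIntegrand, mul_left_comm, circleMap_exp_neg_sq, ← exp_nat_mul, ← exp_neg, ← exp_add,
      ← hn']
    congr 2
    field_simp
    ring
  have hsub := intervalIntegral.integral_comp_mul_left (a := -(π / s ^ 3)) (b := π / s ^ 3)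
    (fun θ ↦ distinctProd (circleMap 0 r θ) * (circleMap 0 r θ ^ n)⁻¹) (pow_ne_zero 3 hs.ne')
  rw [mul_neg, mul_div_cancel₀ _ (pow_ne_zero 3 hs.ne'), hcoeff] at hsub
  simp only [hscale, intervalIntegral.integral_const_mul, hsub]
  push_cast [real_smul]
  ring

lemma eventually_mem_Ioc_neg_div_pow {a : ℝ} (ha : 0 < a) {k : ℕ} (hk : k ≠ 0) (u : ℝ) :
    ∀ᶠ s in 𝓝[>] (0 : ℝ), u ∈ Ioc (-(a / s ^ k)) (a / s ^ k) := by
  have hlim : Tendsto (fun s : ℝ ↦ a * s⁻¹ ^ k) (𝓝[>] 0) atTop :=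
    ((tendsto_pow_atTop hk).comp tendsto_inv_nhdsGT_zero).const_mul_atTop ha
  filter_upwards [hlim.eventually_gt_atTop |u|] with s hs
  rw [inv_pow, ← div_eq_mul_inv] at hs
  exact ⟨(abs_lt.1 hs).1, (abs_lt.1 hs).2.le⟩

lemma tendsto_integral_saddleIntegrand :
    Tendsto (fun s ↦ ∫ u in -(π / s ^ 3)..π / s ^ 3, saddleIntegrand s u) (𝓝[>] 0)
      (𝓝 ((√2)⁻¹ * √(π / c ^ 2) : ℝ)) := by
  obtain ⟨K, hK⟩ := exists_eventually_norm_saddleIntegrand_le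
  have hmem {s u : ℝ} (hs : 0 < s) : u ∈ Ioc (-(π / s ^ 3)) (π / s ^ 3) → |s ^ 3 * u| ≤ π := by
    rintro ⟨hlo, hhi⟩
    have hs₃ : 0 < s ^ 3 := pow_pos hs 3
    rw [← neg_div, div_lt_iff₀' hs₃] at hlo
    exact abs_le.2 ⟨hlo.le, (le_div_iff₀' hs₃).1 hhi⟩
  have hlim := tendsto_integral_filter_of_dominated_convergence (μ := volume) (l := 𝓝[>] (0 : ℝ))
    (F := fun s ↦ (Ioc (-(π / s ^ 3)) (π / s ^ 3)).indicator (saddleIntegrand s))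
    (f := fun u ↦ (((√2)⁻¹ * Real.exp (-c ^ 2 * u ^ 2) : ℝ) : ℂ))
    (fun u ↦ K * (1 + u ^ 2)⁻¹) ?_ ?_ (integrable_inv_one_add_sq.const_mul K) ?_
  · rw [integral_complex_ofReal, integral_const_mul, integral_gaussian] at hlim
    refine hlim.congr' ?_
    filter_upwards [self_mem_nhdsWithin] with s hs
    have hs : 0 < s := hs
    rw [integral_indicator measurableSet_Ioc, intervalIntegral.integral_of_le]
    exact neg_le_self (by positivity)
  · filter_upwards [self_mem_nhdsWithin] with s hs
    exact (continuous_saddleIntegrand (ne_of_gt hs)).aestronglyMeasurable.indicator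
      measurableSet_Ioc
  · filter_upwards [hK, self_mem_nhdsWithin] with s hsK hs
    have hK₀ : 0 ≤ K := by
      simpa using (norm_nonneg _).trans (hsK 0 (by simpa using Real.pi_pos.le))
    refine .of_forall fun u ↦ ?_
    rw [norm_indicator_eq_indicator_norm]
    exact indicator_le' (fun v hv ↦ hsK v (hmem hs hv)) (fun v _ ↦ by positivity) u
  · refine .of_forall fun u ↦ (tendsto_saddleIntegrand u).congr' ?_
    filter_upwards [eventually_mem_Ioc_neg_div_pow Real.pi_pos three_ne_zero u] with s hs
    exact (indicator_of_mem hs _).symm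

/-- The scale `s` at which `saddleIntegrand s` is the integrand for `qd n`: the solution of
`n * s ^ 4 = c ^ 2`. -/
noncomputable def saddleScale (n : ℕ) : ℝ := √c / (n : ℝ) ^ (1 / 4 : ℝ)

lemma c_pos : 0 < c := div_pos Real.pi_pos (by positivity)

lemma rpow_one_div_four_pow {x : ℝ} (hx : 0 ≤ x) (k : ℕ) :
    (x ^ (1 / 4 : ℝ)) ^ k = x ^ (k / 4 : ℝ) := by
  rw [← Real.rpow_mul_natCast hx, one_div_mul_eq_div]

lemma rpow_one_div_four_sq {x : ℝ} (hx : 0 ≤ x) : (x ^ (1 / 4 : ℝ)) ^ 2 = √x := by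
  rw [rpow_one_div_four_pow hx, Real.sqrt_eq_rpow]
  norm_num

lemma saddleScale_pos {n : ℕ} (hn : n ≠ 0) : 0 < saddleScale n :=
  div_pos (Real.sqrt_pos.2 c_pos) (by positivity)

lemma saddleScale_sq (n : ℕ) : saddleScale n ^ 2 = c / √n := by
  rw [saddleScale, div_pow, Real.sq_sqrt c_pos.le, rpow_one_div_four_sq n.cast_nonneg]

lemma saddleScale_pow_three (n : ℕ) : saddleScale n ^ 3 = √c ^ 3 / (n : ℝ) ^ (3 / 4 : ℝ) := by
  rw [saddleScale, div_pow, rpow_one_div_four_pow n.cast_nonneg, Nat.cast_ofNat]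

lemma mul_saddleScale_pow_four {n : ℕ} (hn : n ≠ 0) : n * saddleScale n ^ 4 = c ^ 2 := by
  rw [pow_mul _ 2 2, saddleScale_sq, div_pow, Real.sq_sqrt n.cast_nonneg,
    mul_div_cancel₀ _ (Nat.cast_ne_zero.2 hn)]

lemma tendsto_saddleScale : Tendsto saddleScale atTop (𝓝[>] 0) := by
  refine tendsto_nhdsWithin_iff.2 ⟨?_, ?_⟩
  · exact ((tendsto_rpow_atTop (by norm_num)).comp tendsto_natCast_atTop_atTop).const_div_atTop _
  · filter_upwards [eventually_ne_atTop 0] with n hn using saddleScale_pos hn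

lemma integral_saddleIntegrand_saddleScale {n : ℕ} (hn : n ≠ 0) :
    ∫ u in -(π / saddleScale n ^ 3)..π / saddleScale n ^ 3, saddleIntegrand (saddleScale n) u =
      (2 * π / √c ^ 3 * (qd n * (n : ℝ) ^ (3 / 4 : ℝ) * Real.exp (-(2 * c * √n))) : ℝ) := by
  have hexp : 2 * c ^ 2 / saddleScale n ^ 2 = 2 * c * √n := by
    rw [saddleScale_sq, div_div_eq_mul_div, sq, ← mul_assoc, mul_right_comm,
      mul_div_cancel_right₀ _ c_pos.ne']
  rw [integral_saddleIntegrand (saddleScale_pos hn) (mul_saddleScale_pow_four hn), hexp,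
    saddleScale_pow_three, div_div_eq_mul_div]
  congr 1
  ring

lemma tendsto_qd_mul_rpow_mul_exp :
    Tendsto (fun n : ℕ ↦ 2 * π / √c ^ 3 *
      (qd n * (n : ℝ) ^ (3 / 4 : ℝ) * Real.exp (-(2 * c * √n)))) atTop
      (𝓝 ((√2)⁻¹ * √(π / c ^ 2))) := by
  refine tendsto_ofReal_iff.1
    ((tendsto_integral_saddleIntegrand.comp tendsto_saddleScale).congr' ?_)
  filter_upwards [eventually_ne_atTop 0] with n hn using integral_saddleIntegrand_saddleScale hn

lemma four_mul_three_rpow_mul_sqrt_c_pow_three_mul :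
    4 * (3 : ℝ) ^ (1 / 4 : ℝ) * √c ^ 3 * ((√2)⁻¹ * √(π / c ^ 2)) = 2 * π := by
  have h12 : √12 = 2 * √3 := by
    rw [show (12 : ℝ) = 2 ^ 2 * 3 by norm_num, Real.sqrt_mul (by positivity),
      Real.sqrt_sq two_pos.le]
  have hc : 2 * √3 * c = π := by rw [c, h12, mul_div_cancel₀ _ (by positivity)]
  have hc₀ := c_pos
  refine (sq_eq_sq₀ (by positivity) (by positivity)).1 ?_
  calc (4 * (3 : ℝ) ^ (1 / 4 : ℝ) * √c ^ 3 * ((√2)⁻¹ * √(π / c ^ 2))) ^ 2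
      = 4 ^ 2 * ((3 : ℝ) ^ (1 / 4 : ℝ)) ^ 2 * (√c ^ 2) ^ 3 * ((√2 ^ 2)⁻¹ * √(π / c ^ 2) ^ 2) := by
        ring
    _ = 4 * π * (2 * √3 * c) := by
        rw [rpow_one_div_four_sq three_pos.le, Real.sq_sqrt hc₀.le,
          Real.sq_sqrt two_pos.le, Real.sq_sqrt (by positivity)]
        field_simp
        ring
    _ = (2 * π) ^ 2 := by
        rw [hc]
        ring

end DistinctPartitions

theorem stmt_18 :
    Tendsto (fun E : ℕ =>
        (qd E : ℝ) * 4 * (3 : ℝ) ^ ((1 : ℝ) / 4) * (E : ℝ) ^ ((3 : ℝ) / 4) *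
          Real.exp (-(2 * c * Real.sqrt E)))
      atTop (nhds 1) := by
  have hlim := tendsto_qd_mul_rpow_mul_exp.const_mul
    (4 * (3 : ℝ) ^ (1 / 4 : ℝ) * Real.sqrt c ^ 3 / (2 * Real.pi))
  rw [div_mul_eq_mul_div, four_mul_three_rpow_mul_sqrt_c_pow_three_mul,
    div_self (by positivity)] at hlim
  refine hlim.congr fun E ↦ ?_
  have hc := Real.sqrt_pos.2 c_pos
  field_simp
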